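/- arXiv:1608.01590 — 5 statements merged into one kernel-verified Lean document; each statement's English description precedes it below -/
import Mathlib

section
/- Let N ≥ 1. For each i ∈ {1,…,N} let f_i : ℝ^{n_i} × ℝ^{m_i} × ℝ^{p_i} → ℝ^{n_i}, h_{1i} : ℝ^{n_i} → ℝ^{q_{1i}}, h_{2i} : ℝ^{n_i} → ℝ^{q_{2i}} be the dynamics and output maps of a control subsystem Σ_i, and let f̂_i : ℝ^{n̂_i} × ℝ^{m̂_i} × ℝ^{p̂_i} → ℝ^{n̂_i}, ĥ_{1i} : ℝ^{n̂_i} → ℝ^{q_{1i}}, ĥ_{2i} : ℝ^{n̂_i} → ℝ^{q̂_{2i}} be those of an abstraction Σ̂_i. Suppose each continuously differentiable V_i : ℝ^{n_i} × ℝ^{n̂_i} → ℝ_{≥0} is a storage function from Σ̂_i to Σ_i with associated α_i, η_i ∈ K∞, ρ_{i,ext} ∈ K∞ ∪ {0}, matrices W_i ∈ ℝ^{r_i×p_i}, Ŵ_i ∈ ℝ^{r_i×p̂_i}, H_i ∈ ℝ^{q_{2i}×q̂_{2i}}, and symmetric X_i ∈ ℝ^{(r_i+q_{2i})×(r_i+q_{2i})}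 with conformal blocks X_i^{11}, X_i^{12}, X_i^{21}, X_i^{22} and X_i^{22} ⪯ 0. Set p = Σ_i p_i, p̂ = Σ_i p̂_i, q̃ = Σ_i q_{2i}, q̂̃ = Σ_i q̂_{2i}, W = diag(W_1,…,W_N), Ŵ = diag(Ŵ_1,…,Ŵ_N), H = diag(H_1,…,H_N), and let X(μ_1X_1,…,μ_NX_N) denote the symmetric matrix whose (1,1), (1,2), (2,1), (2,2) blocks are diag(μ_1X_1^{11},…,μ_NX_N^{11}), diag(μ_1X_1^{12},…,μ_NX_N^{12}), diag(μ_1X_1^{21},…,μ_NX_N^{21}), diag(μ_1X_1^{22},…,μ_NX_N^{22}). Suppose there exist μ_1,…,μ_N > 0 and coupling matrices M ∈ ℝ^{p×q̃}, M̂ ∈ ℝ^{p̂×q̂̃} such that [WM; I_{q̃}]ᵀ X(μ_1X_1,…,μ_NX_N) [WM; I_{q̃}] ⪯ 0 and WMH = ŴM̂. Define the interconnected dynamics f(x,u) = [f_1(x_1,u_1,w_1); … ; f_N(x_N,u_N,w_N)] with [w_1;…;w_N] = M[h_{21}(x_1);…;h_{2N}(x_N)] and output h(x) = [h_{11}(x_1);…;h_{1N}(x_N)],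 and analogously f̂(x̂,û), ĥ(x̂) using M̂ and the hatted maps. Then V(x,x̂) := Σ_{i=1}^N μ_i V_i(x_i,x̂_i) is a simulation function from the interconnection of the abstractions to the interconnection of the concrete subsystems: there exist α, η ∈ K∞ and ρ_ext ∈ K∞ ∪ {0} such that α(‖h(x) − ĥ(x̂)‖) ≤ V(x,x̂) for all x, x̂, and for every x, x̂ and every û there exists u with ∇V(x,x̂)ᵀ[f(x,u); f̂(x̂,û)] ≤ −η(V(x,x̂)) + ρ_ext(‖û‖). -/
open Matrix

/-- The Euclidean norm of a finitely indexed real vector. -/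
noncomputable def euclNorm {ι : Type*} [Fintype ι] (x : ι → ℝ) : ℝ :=
  Real.sqrt (∑ i, (x i) ^ 2)

/-- A class `K∞` function: continuous and strictly increasing on `[0,∞)`, vanishing at `0`,
and tending to `∞`. -/
def IsKInf (γ : ℝ → ℝ) : Prop :=
  ContinuousOn γ (Set.Ici 0) ∧ StrictMonoOn γ (Set.Ici 0) ∧ γ 0 = 0 ∧
    Filter.Tendsto γ Filter.atTop Filter.atTop

theorem IsKInf.scale {g : ℝ → ℝ} (hg : IsKInf g) {c k : ℝ} (hc : 0 < c) (hk : 0 < k) :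
    IsKInf (fun s => c * g (s * k)) := by
  obtain ⟨h1, h2, h3, h4⟩ := hg
  have hmaps : Set.MapsTo (fun s : ℝ => s * k) (Set.Ici 0) (Set.Ici 0) := fun s hs =>
    mul_nonneg hs hk.le
  refine ⟨?_, ?_, ?_, ?_⟩
  · exact continuousOn_const.mul (h1.comp (by fun_prop) hmaps)
  · intro a ha b hb hab
    exact mul_lt_mul_of_pos_left (h2 (hmaps ha) (hmaps hb) (mul_lt_mul_of_pos_right hab hk)) hc
  · simp [h3]
  · exact (h4.comp (Filter.tendsto_id.atTop_mul_const hk)).const_mul_atTop hc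

theorem IsKInf.add {g g' : ℝ → ℝ} (hg : IsKInf g) (hg' : IsKInf g') :
    IsKInf (g + g') := by
  obtain ⟨h1, h2, h3, h4⟩ := hg
  obtain ⟨h1', h2', h3', h4'⟩ := hg'
  exact ⟨h1.add h1', h2.add h2', by simp [h3, h3'], h4.atTop_add_atTop h4'⟩

theorem IsKInf.inf_fam {N : ℕ} (hne : (Finset.univ : Finset (Fin N)).Nonempty)
    (g : Fin N → ℝ → ℝ) (hg : ∀ i, IsKInf (g i)) :
    IsKInf (fun s => Finset.univ.inf' hne (fun i => g i s)) := by
  refine ⟨?_, ?_, ?_, ?_⟩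
  · exact ContinuousOn.finset_inf'_apply hne (fun i _ => (hg i).1)
  · intro a ha b hb hab
    simp only [Finset.lt_inf'_iff]
    intro i _
    exact (Finset.inf'_le _ (Finset.mem_univ i)).trans_lt ((hg i).2.1 ha hb hab)
  · have : ∀ i, g i 0 = 0 := fun i => (hg i).2.2.1
    simp [this]
  · rw [Filter.tendsto_atTop]
    intro b
    have : ∀ᶠ s in Filter.atTop, ∀ i, b ≤ g i s :=
      Filter.eventually_all.2 fun i => (Filter.tendsto_atTop.1 (hg i).2.2.2) b
    filter_upwards [this] with s hs
    exact Finset.le_inf' _ _ (fun i _ => hs i)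

theorem IsKInf.nonneg {g : ℝ → ℝ} (hg : IsKInf g) {s : ℝ} (hs : 0 ≤ s) : 0 ≤ g s := by
  have := hg.2.1.monotoneOn (Set.mem_Ici.2 le_rfl) (Set.mem_Ici.2 hs) hs
  rwa [hg.2.2.1] at this

theorem kinf_lower {N : ℕ} (hN : 1 ≤ N) (g : Fin N → ℝ → ℝ) (hg : ∀ i, IsKInf (g i))
    (c k : Fin N → ℝ) (hc : ∀ i, 0 < c i) (hk : ∀ i, 0 < k i) :
    ∃ γ, IsKInf γ ∧ ∀ (a : Fin N → ℝ) (s : ℝ), (∀ i, 0 ≤ a i) → 0 ≤ s →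
      s ≤ ∑ i, k i * a i → γ s ≤ ∑ i, c i * g i (a i) := by
  have hne : (Finset.univ : Finset (Fin N)).Nonempty := ⟨⟨0, hN⟩, Finset.mem_univ _⟩
  have hN0 : (0 : ℝ) < N := by exact_mod_cast hN
  have hkk : ∀ i, 0 < (N * k i)⁻¹ := fun i => inv_pos.2 (mul_pos hN0 (hk i))
  refine ⟨_, IsKInf.inf_fam hne (fun i s => c i * g i (s * (N * k i)⁻¹))
    (fun i => (hg i).scale (hc i) (hkk i)), ?_⟩
  intro a s ha hs hsum
  obtain ⟨i, -, hi⟩ : ∃ i ∈ Finset.univ, s / N ≤ k i * a i := by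
    apply Finset.exists_le_of_sum_le hne
    simpa [mul_div_cancel₀ s hN0.ne', mul_div_assoc, mul_div_cancel_left₀] using
      (by rw [mul_div_cancel₀ s hN0.ne']; exact hsum : (N:ℝ) * (s / N) ≤ ∑ i, k i * a i)
  have h1 : s * (N * k i)⁻¹ ≤ a i := by
    rw [← div_eq_mul_inv, div_le_iff₀ (mul_pos hN0 (hk i))]
    rw [div_le_iff₀ hN0] at hi
    linarith
  have h2 : g i (s * (N * k i)⁻¹) ≤ g i (a i) :=
    (hg i).2.1.monotoneOn (Set.mem_Ici.2 (mul_nonneg hs (hkk i).le)) (Set.mem_Ici.2 (ha i)) h1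
  calc _ ≤ c i * g i (s * (N * k i)⁻¹) :=
        Finset.inf'_le (fun i => c i * g i (s * (N * k i)⁻¹)) (Finset.mem_univ i)
    _ ≤ c i * g i (a i) := mul_le_mul_of_nonneg_left h2 (hc i).le
    _ ≤ _ := Finset.single_le_sum (f := fun i => c i * g i (a i))
        (fun j _ => mul_nonneg (hc j).le ((hg j).nonneg (ha j))) (Finset.mem_univ i)

theorem kinf_upper {N : ℕ} (g : Fin N → ℝ → ℝ) (hg : ∀ i, IsKInf (g i) ∨ g i = 0)
    (c : Fin N → ℝ) (hc : ∀ i, 0 < c i) :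
    ∃ γ, (IsKInf γ ∨ γ = 0) ∧ ∀ (a : Fin N → ℝ) (s : ℝ), (∀ i, 0 ≤ a i) →
      (∀ i, a i ≤ s) → ∑ i, c i * g i (a i) ≤ γ s := by
  refine ⟨∑ i, fun s => c i * g i s, ?_, ?_⟩
  · apply Finset.sum_induction (fun i => fun s => c i * g i s) (fun γ => IsKInf γ ∨ γ = 0)
    · rintro a b (ha | rfl) (hb | rfl)
      · exact Or.inl (ha.add hb)
      · simpa using Or.inl ha
      · simpa using Or.inl hb
      · simp
    · exact Or.inr rfl
    · intro i _
      rcases hg i with h | h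
      · left
        simpa using h.scale (hc i) one_pos
      · right
        funext s
        simp [h]
  · intro a s ha has
    rw [Finset.sum_apply]
    refine Finset.sum_le_sum fun i _ => mul_le_mul_of_nonneg_left ?_ (hc i).le
    rcases hg i with h | h
    · exact h.2.1.monotoneOn (ha i) ((ha i).trans (has i)) (has i)
    · simp [h]

theorem euclNorm_nonneg {ι : Type*} [Fintype ι] (x : ι → ℝ) : 0 ≤ euclNorm x :=
  Real.sqrt_nonneg _

theorem euclNorm_sq {ι : Type*} [Fintype ι] (x : ι → ℝ) : euclNorm x ^ 2 = ∑ i, x i ^ 2 :=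
  Real.sq_sqrt (Finset.sum_nonneg fun _ _ => sq_nonneg _)

theorem euclNorm_sigma_sq {N : ℕ} {d : Fin N → ℕ} (x : ∀ i, Fin (d i) → ℝ) :
    euclNorm (fun a : (i : Fin N) × Fin (d i) => x a.1 a.2) ^ 2 = ∑ i, euclNorm (x i) ^ 2 := by
  simp only [euclNorm_sq, Fintype.sum_sigma]

theorem euclNorm_sigma_le {N : ℕ} {d : Fin N → ℕ} (x : ∀ i, Fin (d i) → ℝ) :
    euclNorm (fun a : (i : Fin N) × Fin (d i) => x a.1 a.2) ≤ ∑ i, euclNorm (x i) := by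
  have h0 : ∀ i, 0 ≤ euclNorm (x i) := fun i => euclNorm_nonneg _
  refine (sq_le_sq₀ (euclNorm_nonneg _) (Finset.sum_nonneg fun i _ => h0 i)).1 ?_
  rw [euclNorm_sigma_sq]
  rw [sq (∑ i, euclNorm (x i)), Finset.sum_mul]
  refine Finset.sum_le_sum fun i _ => ?_
  rw [sq]
  exact mul_le_mul_of_nonneg_left (Finset.single_le_sum (f := fun i => euclNorm (x i))
    (fun j _ => h0 j) (Finset.mem_univ i)) (h0 i)

theorem le_euclNorm_sigma {N : ℕ} {d : Fin N → ℕ} (x : ∀ i, Fin (d i) → ℝ) (i : Fin N) :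
    euclNorm (x i) ≤ euclNorm (fun a : (i : Fin N) × Fin (d i) => x a.1 a.2) := by
  refine (sq_le_sq₀ (euclNorm_nonneg _) (euclNorm_nonneg _)).1 ?_
  rw [euclNorm_sigma_sq]
  exact Finset.single_le_sum (f := fun i => euclNorm (x i) ^ 2) (fun j _ => sq_nonneg _)
    (Finset.mem_univ i)

theorem blockDiag_mulVec {N : ℕ} {d e : Fin N → ℕ} (B : ∀ i, Matrix (Fin (d i)) (Fin (e i)) ℝ)
    (v : ((i : Fin N) × Fin (e i)) → ℝ) (i : Fin N) (j : Fin (d i)) :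
    (Matrix.blockDiagonal' B *ᵥ v) ⟨i, j⟩ = (B i *ᵥ fun k => v ⟨i, k⟩) j := by
  simp only [Matrix.mulVec, dotProduct, Fintype.sum_sigma]
  rw [Finset.sum_eq_single i]
  · simp [Matrix.blockDiagonal'_apply_eq]
  · intro b _ hb
    refine Finset.sum_eq_zero fun k _ => ?_
    rw [Matrix.blockDiagonal'_apply_ne _ _ _ hb.symm, zero_mul]
  · simp

theorem quad_sum {N : ℕ} {r q : Fin N → ℕ} (μ : Fin N → ℝ)
    (X : ∀ i, Matrix (Fin (r i) ⊕ Fin (q i)) (Fin (r i) ⊕ Fin (q i)) ℝ)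
    (a : ((i : Fin N) × Fin (r i)) → ℝ) (b : ((i : Fin N) × Fin (q i)) → ℝ) :
    ∑ i, μ i * (Sum.elim (fun j => a ⟨i, j⟩) (fun j => b ⟨i, j⟩) ⬝ᵥ
      (X i).mulVec (Sum.elim (fun j => a ⟨i, j⟩) (fun j => b ⟨i, j⟩))) =
    Sum.elim a b ⬝ᵥ (Matrix.fromBlocks
            (Matrix.blockDiagonal' fun i => μ i • (X i).toBlocks₁₁)
            (Matrix.blockDiagonal' fun i => μ i • (X i).toBlocks₁₂)
            (Matrix.blockDiagonal' fun i => μ i • (X i).toBlocks₂₁)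
            (Matrix.blockDiagonal' fun i => μ i • (X i).toBlocks₂₂)).mulVec (Sum.elim a b) := by
  rw [Matrix.fromBlocks_mulVec]
  simp only [Sum.elim_comp_inl, Sum.elim_comp_inr, dotProduct, Fintype.sum_sum_type,
    Sum.elim_inl, Sum.elim_inr, Fintype.sum_sigma, Pi.add_apply, blockDiag_mulVec]
  rw [← Finset.sum_add_distrib]
  refine Finset.sum_congr rfl fun i _ => ?_
  rw [mul_add, Finset.mul_sum, Finset.mul_sum]
  simp only [Matrix.smul_mulVec, Pi.smul_apply, smul_eq_mul]
  congr 1 <;> refine Finset.sum_congr rfl fun j _ => ?_ <;>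
  · simp only [Matrix.mulVec, dotProduct, Fintype.sum_sum_type, Sum.elim_inl, Sum.elim_inr,
      Matrix.toBlocks₁₁, Matrix.toBlocks₁₂, Matrix.toBlocks₂₁, Matrix.toBlocks₂₂, Matrix.of_apply]
    ring


/-- Theorem 4.2, compositionality: if each subsystem `Σᵢ` admits an
abstraction `Σ̂ᵢ` with storage function `Vᵢ`, and the dissipativity-type compositionality
conditions (5) and (6) hold for some `μᵢ > 0` and coupling matrices `M`, `M̂`, then
`V(x,x̂) = Σᵢ μᵢ Vᵢ(xᵢ,x̂ᵢ)` is a simulation function from the interconnection of the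
abstractions to the interconnection of the concrete subsystems. -/
theorem stmt_0
    (N : ℕ) (hN : 1 ≤ N)
    -- dimensions of the subsystems and of their abstractions
    (n m p q1 q2 r n' m' p' q2' : Fin N → ℕ)
    -- the concrete subsystems Σᵢ
    (f : ∀ i, (Fin (n i) → ℝ) → (Fin (m i) → ℝ) → (Fin (p i) → ℝ) → (Fin (n i) → ℝ))
    (h1 : ∀ i, (Fin (n i) → ℝ) → (Fin (q1 i) → ℝ))
    (h2 : ∀ i, (Fin (n i) → ℝ) → (Fin (q2 i) → ℝ))
    -- the abstractions Σ̂ᵢ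
    (fh : ∀ i, (Fin (n' i) → ℝ) → (Fin (m' i) → ℝ) → (Fin (p' i) → ℝ) → (Fin (n' i) → ℝ))
    (h1h : ∀ i, (Fin (n' i) → ℝ) → (Fin (q1 i) → ℝ))
    (h2h : ∀ i, (Fin (n' i) → ℝ) → (Fin (q2' i) → ℝ))
    -- the storage functions Vᵢ from Σ̂ᵢ to Σᵢ, with their associated data
    (V : ∀ i, (Fin (n i) → ℝ) → (Fin (n' i) → ℝ) → ℝ)
    (hVC1 : ∀ i, ContDiff ℝ 1
      (fun z : (Fin (n i) → ℝ) × (Fin (n' i) → ℝ) => V i z.1 z.2))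
    (hVnonneg : ∀ i x xh, 0 ≤ V i x xh)
    (α η ρ : ∀ _ : Fin N, ℝ → ℝ)
    (hα : ∀ i, IsKInf (α i)) (hη : ∀ i, IsKInf (η i))
    (hρ : ∀ i, IsKInf (ρ i) ∨ ρ i = 0)
    (W : ∀ i, Matrix (Fin (r i)) (Fin (p i)) ℝ)
    (Wh : ∀ i, Matrix (Fin (r i)) (Fin (p' i)) ℝ)
    (H : ∀ i, Matrix (Fin (q2 i)) (Fin (q2' i)) ℝ)
    (X : ∀ i, Matrix (Fin (r i) ⊕ Fin (q2 i)) (Fin (r i) ⊕ Fin (q2 i)) ℝ)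
    (hXsym : ∀ i, (X i).IsSymm)
    (hX22 : ∀ i, (-(X i).toBlocks₂₂).PosSemidef)
    (hsf1 : ∀ i x xh, α i (euclNorm (h1 i x - h1h i xh)) ≤ V i x xh)
    (hsf2 : ∀ i x xh uh, ∃ u, ∀ w wh,
      fderiv ℝ (fun z : (Fin (n i) → ℝ) × (Fin (n' i) → ℝ) => V i z.1 z.2) (x, xh)
          (f i x u w, fh i xh uh wh) ≤
        -(η i (V i x xh)) + ρ i (euclNorm uh) +
          (Sum.elim ((W i).mulVec w - (Wh i).mulVec wh)
              (h2 i x - (H i).mulVec (h2h i xh))) ⬝ᵥ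
            (X i).mulVec
              (Sum.elim ((W i).mulVec w - (Wh i).mulVec wh)
                (h2 i x - (H i).mulVec (h2h i xh))))
    -- the coefficients μᵢ > 0 and the coupling matrices M, M̂
    (μ : Fin N → ℝ) (hμ : ∀ i, 0 < μ i)
    (M : Matrix ((i : Fin N) × Fin (p i)) ((i : Fin N) × Fin (q2 i)) ℝ)
    (Mh : Matrix ((i : Fin N) × Fin (p' i)) ((i : Fin N) × Fin (q2' i)) ℝ)
    -- the compositionality condition (5): [WM; I]ᵀ X(μ₁X₁,…,μ_N X_N) [WM; I] ⪯ 0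
    (hLMI :
      (-((Matrix.fromRows (Matrix.blockDiagonal' W * M)
            (1 : Matrix ((i : Fin N) × Fin (q2 i)) ((i : Fin N) × Fin (q2 i)) ℝ))ᵀ *
          Matrix.fromBlocks
            (Matrix.blockDiagonal' fun i => μ i • (X i).toBlocks₁₁)
            (Matrix.blockDiagonal' fun i => μ i • (X i).toBlocks₁₂)
            (Matrix.blockDiagonal' fun i => μ i • (X i).toBlocks₂₁)
            (Matrix.blockDiagonal' fun i => μ i • (X i).toBlocks₂₂) *
          Matrix.fromRows (Matrix.blockDiagonal' W * M)
            (1 : Matrix ((i : Fin N) × Fin (q2 i)) ((i : Fin N) × Fin (q2 i)) ℝ))).PosSemidef)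
    -- the compositionality condition (6): W M H = Ŵ M̂
    (hWMH : Matrix.blockDiagonal' W * M * Matrix.blockDiagonal' H =
      Matrix.blockDiagonal' Wh * Mh) :
    -- conclusion: V(x,x̂) = Σᵢ μᵢ Vᵢ(xᵢ,x̂ᵢ) is a simulation function from
    -- Σ̂ = I(Σ̂₁,…,Σ̂_N) (coupled by M̂) to Σ = I(Σ₁,…,Σ_N) (coupled by M)
    ∃ αc ηc ρc : ℝ → ℝ,
      IsKInf αc ∧ IsKInf ηc ∧ (IsKInf ρc ∨ ρc = 0) ∧
      (∀ (x : ∀ i, Fin (n i) → ℝ) (xh : ∀ i, Fin (n' i) → ℝ),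
        αc (euclNorm (fun j : (i : Fin N) × Fin (q1 i) =>
            h1 j.1 (x j.1) j.2 - h1h j.1 (xh j.1) j.2)) ≤
          ∑ i, μ i * V i (x i) (xh i)) ∧
      (∀ (x : ∀ i, Fin (n i) → ℝ) (xh : ∀ i, Fin (n' i) → ℝ)
          (uh : ∀ i, Fin (m' i) → ℝ),
        ∃ u : ∀ i, Fin (m i) → ℝ,
          fderiv ℝ
              (fun z : (∀ i, Fin (n i) → ℝ) × (∀ i, Fin (n' i) → ℝ) =>
                ∑ i, μ i * V i (z.1 i) (z.2 i))
              (x, xh)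
              (fun i => f i (x i) (u i)
                  (fun j => M.mulVec (fun a => h2 a.1 (x a.1) a.2) ⟨i, j⟩),
               fun i => fh i (xh i) (uh i)
                  (fun j => Mh.mulVec (fun a => h2h a.1 (xh a.1) a.2) ⟨i, j⟩)) ≤
            -(ηc (∑ i, μ i * V i (x i) (xh i))) +
              ρc (euclNorm (fun a : (i : Fin N) × Fin (m' i) => uh a.1 a.2))) := by
  obtain ⟨αc, hαc, hαc'⟩ := kinf_lower hN α hα μ (fun _ => 1) hμ (fun _ => one_pos)
  obtain ⟨ηc, hηc, hηc'⟩ := kinf_lower hN η hη μ μ hμ hμ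
  obtain ⟨ρc, hρc, hρc'⟩ := kinf_upper ρ hρ μ hμ
  refine ⟨αc, ηc, ρc, hαc, hηc, hρc, ?_, ?_⟩
  · intro x xh
    refine (hαc' (fun i => euclNorm (h1 i (x i) - h1h i (xh i))) _
      (fun i => euclNorm_nonneg _) (euclNorm_nonneg _) ?_).trans
      (Finset.sum_le_sum fun i _ => mul_le_mul_of_nonneg_left (hsf1 i (x i) (xh i)) (hμ i).le)
    simp only [one_mul]
    exact euclNorm_sigma_le (fun i => h1 i (x i) - h1h i (xh i))
  · intro x xh uh
    choose u hu using fun i => hsf2 i (x i) (xh i) (uh i)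
    refine ⟨u, ?_⟩
    have hder : HasFDerivAt (fun z : (∀ i, Fin (n i) → ℝ) × (∀ i, Fin (n' i) → ℝ) =>
          ∑ i, μ i * V i (z.1 i) (z.2 i))
        (∑ i, μ i • (fderiv ℝ (fun z : (Fin (n i) → ℝ) × (Fin (n' i) → ℝ) => V i z.1 z.2)
            (x i, xh i)).comp
          (((ContinuousLinearMap.proj (R := ℝ) (φ := fun i => Fin (n i) → ℝ) i).comp
              (ContinuousLinearMap.fst ℝ _ _)).prod
            ((ContinuousLinearMap.proj (R := ℝ) (φ := fun i => Fin (n' i) → ℝ) i).comp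
              (ContinuousLinearMap.snd ℝ _ _)))) (x, xh) := by
      refine HasFDerivAt.fun_sum fun i _ => HasFDerivAt.const_mul ?_ (μ i)
      have h1 := ((hVC1 i).differentiable one_ne_zero (x i, xh i)).hasFDerivAt
      exact HasFDerivAt.comp (x, xh) (f := fun z : (∀ i, Fin (n i) → ℝ) × (∀ i, Fin (n' i) → ℝ) =>
        (z.1 i, z.2 i)) h1 (ContinuousLinearMap.hasFDerivAt
        (((ContinuousLinearMap.proj (R := ℝ) (φ := fun i => Fin (n i) → ℝ) i).comp
              (ContinuousLinearMap.fst ℝ _ _)).prod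
            ((ContinuousLinearMap.proj (R := ℝ) (φ := fun i => Fin (n' i) → ℝ) i).comp
              (ContinuousLinearMap.snd ℝ _ _))))
    rw [hder.fderiv, ContinuousLinearMap.sum_apply]
    set w : ∀ i, Fin (p i) → ℝ :=
      fun i j => M.mulVec (fun a => h2 a.1 (x a.1) a.2) ⟨i, j⟩ with hw
    set wh : ∀ i, Fin (p' i) → ℝ :=
      fun i j => Mh.mulVec (fun a => h2h a.1 (xh a.1) a.2) ⟨i, j⟩ with hwh
    set y : ((i : Fin N) × Fin (q2 i)) → ℝ := (fun a => h2 a.1 (x a.1) a.2) -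
      Matrix.blockDiagonal' H *ᵥ (fun a => h2h a.1 (xh a.1) a.2) with hy
    set b : ((i : Fin N) × Fin (r i)) → ℝ := (Matrix.blockDiagonal' W * M) *ᵥ y with hb
    have hyi : ∀ i, h2 i (x i) - (H i).mulVec (h2h i (xh i)) = fun j => y ⟨i, j⟩ := by
      intro i
      funext j
      simp only [hy, Pi.sub_apply, blockDiag_mulVec]
    have hbi : ∀ i, (W i).mulVec (w i) - (Wh i).mulVec (wh i) = fun j => b ⟨i, j⟩ := by
      intro i
      funext j
      rw [hb, hy, Matrix.mulVec_sub, Matrix.mulVec_mulVec, hWMH, ← Matrix.mulVec_mulVec,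
        ← Matrix.mulVec_mulVec]
      simp only [Pi.sub_apply, blockDiag_mulVec]
      rfl
    have hquad : ∑ i, μ i * (Sum.elim (fun j => b ⟨i, j⟩) (fun j => y ⟨i, j⟩) ⬝ᵥ
        (X i).mulVec (Sum.elim (fun j => b ⟨i, j⟩) (fun j => y ⟨i, j⟩))) ≤ 0 := by
      rw [quad_sum]
      have h := hLMI.dotProduct_mulVec_nonneg y
      have he : Sum.elim b y = Matrix.fromRows (Matrix.blockDiagonal' W * M)
            (1 : Matrix ((i : Fin N) × Fin (q2 i)) ((i : Fin N) × Fin (q2 i)) ℝ) *ᵥ y := by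
        rw [Matrix.fromRows_mulVec, Matrix.one_mulVec]
      rw [Matrix.neg_mulVec, dotProduct_neg, ← Matrix.mulVec_mulVec, ← Matrix.mulVec_mulVec,
        ← he, Matrix.mulVec_transpose, dotProduct_comm, ← Matrix.dotProduct_mulVec, star_trivial,
        ← he, dotProduct_comm] at h
      linarith
    have hterm : ∀ i, μ i * (fderiv ℝ (fun z : (Fin (n i) → ℝ) × (Fin (n' i) → ℝ) => V i z.1 z.2)
          (x i, xh i) (f i (x i) (u i) (w i), fh i (xh i) (uh i) (wh i))) ≤
        -(μ i * η i (V i (x i) (xh i))) + μ i * ρ i (euclNorm (uh i)) +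
          μ i * (Sum.elim (fun j => b ⟨i, j⟩) (fun j => y ⟨i, j⟩) ⬝ᵥ
        (X i).mulVec (Sum.elim (fun j => b ⟨i, j⟩) (fun j => y ⟨i, j⟩))) := by
      intro i
      have h := mul_le_mul_of_nonneg_left (hu i (w i) (wh i)) (hμ i).le
      rw [hyi, hbi] at h
      linarith
    have hsum := Finset.sum_le_sum fun i (_ : i ∈ Finset.univ) => hterm i
    rw [Finset.sum_add_distrib, Finset.sum_add_distrib, Finset.sum_neg_distrib] at hsum
    have hE := hηc' (fun i => V i (x i) (xh i)) (∑ i, μ i * V i (x i) (xh i))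
      (fun i => hVnonneg i _ _)
      (Finset.sum_nonneg fun i _ => mul_nonneg (hμ i).le (hVnonneg i _ _)) le_rfl
    have hR := hρc' (fun i => euclNorm (uh i)) _ (fun i => euclNorm_nonneg _)
      (fun i => le_euclNorm_sigma uh i)
    refine le_trans (le_of_eq ?_) (hsum.trans (by linarith))
    rfl
end

section
/- Let A ∈ ℝ^{n×n}, B ∈ ℝ^{n×m}, and P ∈ ℝ^{n×n̂}. There exist matrices Â ∈ ℝ^{n̂×n̂} and Q ∈ ℝ^{m×n̂} such that AP = PÂ − BQ if and only if im(AP) ⊆ im P + im B, where im P + im B is the sum of the column spaces of P and B. -/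
/-- `A * P = P * Â - B * Q` solvable iff `im (A * P) ⊆ im P + im B`. -/
theorem stmt_3 {n m n' : ℕ} (A : Matrix (Fin n) (Fin n) ℝ) (B : Matrix (Fin n) (Fin m) ℝ)
    (P : Matrix (Fin n) (Fin n') ℝ) :
    (∃ (Ahat : Matrix (Fin n') (Fin n') ℝ) (Q : Matrix (Fin m) (Fin n') ℝ),
        A * P = P * Ahat - B * Q) ↔
      LinearMap.range (A * P).mulVecLin ≤
        LinearMap.range P.mulVecLin ⊔ LinearMap.range B.mulVecLin := by
  constructor
  · rintro ⟨Ahat, Q, h⟩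
    rw [h]
    rintro _ ⟨v, rfl⟩
    refine Submodule.mem_sup.2 ⟨P.mulVec (Ahat.mulVec v), ⟨_, rfl⟩,
      B.mulVec (-(Q.mulVec v)), ⟨_, rfl⟩, ?_⟩
    simp [Matrix.sub_mulVec, Matrix.mulVec_neg, sub_eq_add_neg]
  · intro h
    have key : ∀ j : Fin n', ∃ (a : Fin n' → ℝ) (q : Fin m → ℝ),
        P.mulVec a + B.mulVec q = (A * P).mulVec (Pi.single j 1) := by
      intro j
      obtain ⟨_, ⟨a, rfl⟩, _, ⟨q, rfl⟩, e⟩ :=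
        Submodule.mem_sup.1 (h ⟨Pi.single j 1, rfl⟩)
      exact ⟨a, q, e⟩
    choose a q e using key
    refine ⟨Matrix.of fun i j => a j i, Matrix.of fun i j => - q j i, ?_⟩
    ext i j
    have := congrFun (e j) i
    rw [Matrix.mulVec_single_one] at this
    change _ = (A * P) i j at this
    rw [← this]
    simp [Matrix.sub_apply, Matrix.mul_apply, Matrix.mulVec, dotProduct]
end

section
/- Let C₁ ∈ ℝ^{q₁×n} and let P ∈ ℝ^{n×n̂} be injective (i.e., of full column rank n̂), and set Ĉ₁ = C₁P. There exist matrices P̂ ∈ ℝ^{n̂×n}, G ∈ ℝ^{n×g}, and T ∈ ℝ^{g×n} (for some g) such that C₁ = Ĉ₁P̂, Iₙ = PP̂ + GT, and I_{n̂} = P̂P, if and only if im P + ker C₁ = ℝⁿ. -/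
/-- existence of `P̂`, `G`, `T` with `C₁ = Ĉ₁ P̂`, `Iₙ = P P̂ + G T`,
`I_{n̂} = P̂ P` (where `Ĉ₁ = C₁ P`) iff `im P + ker C₁ = ℝⁿ`. -/
theorem stmt_7 {n n' q1 : ℕ} (C1 : Matrix (Fin q1) (Fin n) ℝ)
    (P : Matrix (Fin n) (Fin n') ℝ) (hP : Function.Injective P.mulVecLin) :
    (∃ (g : ℕ) (Phat : Matrix (Fin n') (Fin n) ℝ) (G : Matrix (Fin n) (Fin g) ℝ)
        (T : Matrix (Fin g) (Fin n) ℝ),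
        C1 = (C1 * P) * Phat ∧ (1 : Matrix (Fin n) (Fin n) ℝ) = P * Phat + G * T ∧
          (1 : Matrix (Fin n') (Fin n') ℝ) = Phat * P) ↔
      LinearMap.range P.mulVecLin ⊔ LinearMap.ker C1.mulVecLin = ⊤ := by
  constructor
  · rintro ⟨g, Q, G, T, h1, -, -⟩
    rw [eq_top_iff]
    intro x _
    rw [Submodule.mem_sup]
    refine ⟨P.mulVecLin (Q.mulVec x), ⟨_, rfl⟩, x - P.mulVecLin (Q.mulVec x), ?_, by abel⟩
    rw [LinearMap.mem_ker, map_sub]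
    simp only [Matrix.mulVecLin_apply, Matrix.mulVec_mulVec]
    rw [← Matrix.mul_assoc, ← h1, sub_self]
  · intro h
    have hx : ∀ x : Fin n → ℝ, ∃ u, C1.mulVec x = (C1 * P).mulVec u := by
      intro x
      have hm : x ∈ LinearMap.range P.mulVecLin ⊔ LinearMap.ker C1.mulVecLin := by
        rw [h]; trivial
      obtain ⟨y, ⟨u, rfl⟩, k, hk, rfl⟩ := Submodule.mem_sup.1 hm
      refine ⟨u, ?_⟩
      have hk' : C1.mulVec k = 0 := hk
      rw [Matrix.mulVec_add, hk', add_zero, Matrix.mulVecLin_apply, Matrix.mulVec_mulVec]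
    choose u hu using hx
    obtain ⟨X, hX⟩ : ∃ X : Matrix (Fin n') (Fin n) ℝ, C1 * P * X = C1 := by
      refine ⟨Matrix.of fun i j => u (Pi.single j 1) i, ?_⟩
      ext i j
      have := congrFun (hu (Pi.single j 1)) i
      rw [Matrix.mulVec_single_one] at this
      exact this.symm
    obtain ⟨L, hL⟩ : ∃ L : Matrix (Fin n') (Fin n) ℝ, L * P = 1 := by
      obtain ⟨f, hf⟩ := LinearMap.exists_leftInverse_of_injective P.mulVecLin
        (LinearMap.ker_eq_bot.2 hP)
      refine ⟨LinearMap.toMatrix' f, ?_⟩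
      have h2 := congrArg LinearMap.toMatrix' hf
      rw [LinearMap.toMatrix'_comp, LinearMap.toMatrix'_id] at h2
      rwa [← Matrix.toLin'_apply', LinearMap.toMatrix'_toLin'] at h2
    refine ⟨n, L + X * (1 - P * L), 1, 1 - P * (L + X * (1 - P * L)), ?_, ?_, ?_⟩
    · rw [Matrix.mul_add, ← Matrix.mul_assoc _ X, hX, Matrix.mul_sub, Matrix.mul_one,
        ← Matrix.mul_assoc C1 P L]
      abel
    · rw [Matrix.one_mul]
      abel
    · rw [Matrix.add_mul, Matrix.mul_assoc, Matrix.sub_mul, Matrix.mul_assoc P L P, hL]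
      simp
end

section
/- Let F ∈ ℝ^{1×n} and let P ∈ ℝ^{n×n̂} be injective (i.e., of full column rank n̂), and set F̂ = FP. There exists a matrix P̂ ∈ ℝ^{n̂×n} such that F = F̂P̂ if and only if im P + ker F = ℝⁿ. -/
/-- existence of `P̂` with `F = F̂ P̂` (where `F̂ = F P`)
iff `im P + ker F = ℝⁿ`. -/
theorem stmt_8 {n n' : ℕ} (F : Matrix (Fin 1) (Fin n) ℝ)
    (P : Matrix (Fin n) (Fin n') ℝ) (hP : Function.Injective P.mulVecLin) :
    (∃ Phat : Matrix (Fin n') (Fin n) ℝ, F = (F * P) * Phat) ↔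
      LinearMap.range P.mulVecLin ⊔ LinearMap.ker F.mulVecLin = ⊤ := by
  constructor
  · rintro ⟨Q, hQ⟩
    rw [eq_top_iff]
    intro x _
    rw [Submodule.mem_sup]
    refine ⟨P.mulVec (Q.mulVec x), ⟨Q.mulVec x, rfl⟩, x - P.mulVec (Q.mulVec x), ?_, by abel⟩
    rw [LinearMap.mem_ker, Matrix.mulVecLin_apply, Matrix.mulVec_sub, Matrix.mulVec_mulVec,
      Matrix.mulVec_mulVec, ← hQ, sub_self]
  · intro h
    have key : ∀ j : Fin n, ∃ a : Fin n' → ℝ,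
        F.mulVec (Pi.single j 1) = (F * P).mulVec a := by
      intro j
      have hj : (Pi.single j 1 : Fin n → ℝ) ∈
          LinearMap.range P.mulVecLin ⊔ LinearMap.ker F.mulVecLin := by
        rw [h]; trivial
      obtain ⟨y, ⟨a, rfl⟩, z, hz, hyz⟩ := Submodule.mem_sup.1 hj
      rw [LinearMap.mem_ker, Matrix.mulVecLin_apply] at hz
      refine ⟨a, ?_⟩
      rw [← hyz, Matrix.mulVec_add, hz, add_zero, Matrix.mulVecLin_apply, Matrix.mulVec_mulVec]
    choose a ha using key
    refine ⟨Matrix.of fun i j => a j i, ?_⟩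
    ext i j
    have := congrFun (ha j) i
    rw [Matrix.mulVec_single_one] at this
    exact this
end

section
/- Let M̂ ∈ ℝ^{n×n} be symmetric, let A ∈ ℝ^{n×n}, B ∈ ℝ^{n×m}, K ∈ ℝ^{m×n}, L₁ ∈ ℝ^{m×1}, E ∈ ℝ^{n×1}, F ∈ ℝ^{1×n}, and let b > 0. Then the symmetric (n+1)×(n+1) block matrix [[(A+BK)ᵀM̂ + M̂(A+BK), M̂(BL₁+E) + Fᵀ], [(BL₁+E)ᵀM̂ + F, −2/b]] is negative definite if and only if (A + BK + (b/2)(BL₁+E)F)ᵀM̂ + M̂(A + BK + (b/2)(BL₁+E)F) + (b/2)·M̂(BL₁+E)(BL₁+E)ᵀM̂ + (b/2)·FᵀF is negative definite. -/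
open Matrix

/-- A symmetric real matrix is negative definite: `vᵀ S v < 0` for all nonzero `v`. -/
def Matrix.NegDef {ι : Type*} [Fintype ι] (S : Matrix ι ι ℝ) : Prop :=
  ∀ v : ι → ℝ, v ≠ 0 → v ⬝ᵥ S.mulVec v < 0

theorem schur_aux {n : ℕ} (P : Matrix (Fin n) (Fin n) ℝ) (C : Matrix (Fin 1) (Fin n) ℝ)
    (b : ℝ) (hb : 0 < b) :
    (Matrix.fromBlocks P Cᵀ C (Matrix.of fun _ _ => -2 / b)).NegDef ↔
      (P + (b / 2) • (Cᵀ * C)).NegDef := by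
  have key1 : ∀ (x : Fin n → ℝ) (y : Fin 1 → ℝ),
      Sum.elim x y ⬝ᵥ (Matrix.fromBlocks P Cᵀ C (Matrix.of fun _ _ => -2 / b)).mulVec
        (Sum.elim x y) = x ⬝ᵥ P *ᵥ x + 2 * (y 0 * (C *ᵥ x) 0) - 2 / b * (y 0) ^ 2 := by
    intro x y
    have h1 : x ⬝ᵥ Cᵀ *ᵥ y = y 0 * (C *ᵥ x) 0 := by
      rw [Matrix.mulVec_transpose, dotProduct_comm, ← Matrix.dotProduct_mulVec]
      simp [dotProduct]
    have h2 : y ⬝ᵥ C *ᵥ x = y 0 * (C *ᵥ x) 0 := by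
      simp [dotProduct]
    have h3 : y ⬝ᵥ (Matrix.of fun _ _ => -2 / b : Matrix (Fin 1) (Fin 1) ℝ) *ᵥ y
        = - (2 / b * (y 0) ^ 2) := by
      simp [dotProduct, Matrix.mulVec]
      ring
    rw [Matrix.fromBlocks_mulVec, sumElim_dotProduct_sumElim]
    simp only [Sum.elim_comp_inl, Sum.elim_comp_inr, dotProduct_add, h1, h2, h3]
    ring
  have key2 : ∀ x : Fin n → ℝ, x ⬝ᵥ (P + (b / 2) • (Cᵀ * C)) *ᵥ x
      = x ⬝ᵥ P *ᵥ x + b / 2 * ((C *ᵥ x) 0) ^ 2 := by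
    intro x
    have h1 : x ⬝ᵥ (Cᵀ * C) *ᵥ x = ((C *ᵥ x) 0) ^ 2 := by
      rw [← Matrix.mulVec_mulVec, Matrix.mulVec_transpose, dotProduct_comm,
        ← Matrix.dotProduct_mulVec]
      simp [dotProduct, sq]
    rw [Matrix.add_mulVec, dotProduct_add, Matrix.smul_mulVec, dotProduct_smul, h1, smul_eq_mul]
  constructor
  · intro h x hx
    have := h (Sum.elim x (fun _ => b / 2 * (C *ᵥ x) 0)) (by
      intro h0
      apply hx
      ext i
      exact congrFun h0 (Sum.inl i))
    rw [key1] at this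
    rw [key2]
    refine lt_of_eq_of_lt ?_ this
    field_simp
    ring
  · intro h v hv
    obtain ⟨x, y, rfl⟩ : ∃ x y, v = Sum.elim x y :=
      ⟨v ∘ Sum.inl, v ∘ Sum.inr, (Sum.elim_comp_inl_inr v).symm⟩
    rw [key1]
    by_cases hx : x = 0
    · subst hx
      have hy : y 0 ≠ 0 := by
        intro h0
        apply hv
        ext i
        rcases i with i | i
        · rfl
        · rw [Subsingleton.elim i 0]
          exact h0
      have : 0 < 2 / b * (y 0) ^ 2 := by positivity
      simp
      linarith
    · have h1 := h x hx
      rw [key2] at h1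
      have h2 : 0 ≤ 2 / b * (y 0 - b / 2 * (C *ᵥ x) 0) ^ 2 := by positivity
      have h3 : 2 / b * (y 0 - b / 2 * (C *ᵥ x) 0) ^ 2 = 2 / b * (y 0) ^ 2
          - 2 * (y 0 * (C *ᵥ x) 0) + b / 2 * ((C *ᵥ x) 0) ^ 2 := by
        field_simp
        ring
      linarith

/-- Schur-complement characterization of negative definiteness of the
block matrix appearing in the feasibility discussion of LMI (16) for `b < ∞`. -/
theorem stmt_12 {n m : ℕ} (M : Matrix (Fin n) (Fin n) ℝ) (hM : M.IsSymm)
    (A : Matrix (Fin n) (Fin n) ℝ) (B : Matrix (Fin n) (Fin m) ℝ)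
    (K : Matrix (Fin m) (Fin n) ℝ) (L1 : Matrix (Fin m) (Fin 1) ℝ)
    (E : Matrix (Fin n) (Fin 1) ℝ) (F : Matrix (Fin 1) (Fin n) ℝ)
    (b : ℝ) (hb : 0 < b) :
    (Matrix.fromBlocks
        ((A + B * K)ᵀ * M + M * (A + B * K))
        (M * (B * L1 + E) + Fᵀ)
        ((B * L1 + E)ᵀ * M + F)
        (Matrix.of fun _ _ => -2 / b)).NegDef ↔
      ((A + B * K + (b / 2) • ((B * L1 + E) * F))ᵀ * M +
          M * (A + B * K + (b / 2) • ((B * L1 + E) * F)) +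
          (b / 2) • (M * (B * L1 + E) * (B * L1 + E)ᵀ * M) +
          (b / 2) • (Fᵀ * F)).NegDef := by
  have hT : M * (B * L1 + E) + Fᵀ = ((B * L1 + E)ᵀ * M + F)ᵀ := by
    rw [Matrix.transpose_add, Matrix.transpose_mul, Matrix.transpose_transpose, hM.eq]
  rw [hT, schur_aux _ _ b hb, ← hT]
  generalize B * L1 + E = G
  generalize A + B * K = A0
  have : (A0)ᵀ * M + M * A0 + (b / 2) • ((M * G + Fᵀ) * (Gᵀ * M + F)) =
      (A0 + (b / 2) • (G * F))ᵀ * M + M * (A0 + (b / 2) • (G * F)) +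
      (b / 2) • (M * G * Gᵀ * M) + (b / 2) • (Fᵀ * F) := by
    simp only [Matrix.transpose_add, Matrix.transpose_smul, Matrix.transpose_mul, Matrix.add_mul,
      Matrix.mul_add, Matrix.smul_mul, Matrix.mul_smul, smul_add, Matrix.mul_assoc]
    abel
  rw [this]
end
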